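/- Let g, ψ ∈ L²(ℝ, ℂ) and let Δ ⊆ ℝ be a Borel set. Then (1/(2π)) ∫_{Δ×ℝ} |∫_ℝ e^{−ip(x−q)} conj(g(x−q)) ψ(x) dx|² d(q,p) = ∫_ℝ (1_Δ ∗ |g|²)(x) |ψ(x)|² dx, where (1_Δ ∗ |g|²)(x) = ∫_Δ |g(x−y)|² dy. In other words, the position marginal of the phase-space observable generated by g is the smearing of the position observable by the convolution kernel 1_Δ ∗ |g|². -/

import Mathlib

open MeasureTheory

noncomputable section

/-!
For fixed `q`, the function `p ↦ ⟨U_{q,p} g, ψ⟩` is, up to a phase and a dilation by `2π`, the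
Fourier transform of the integrable function `f_q x = conj (g (x - q)) * ψ x`. The Plancherel
identity `∫ |𝓕 f|² = ∫ |f|²` holds for every integrable `f`, both sides being infinite when
`f ∉ L²`: an `L²` Fourier transform determines an `L²` preimage, which agrees with `f` because a
tempered distribution is determined by its Fourier transform. So the `p`-integral equals
`2π ∫ |g (x - q)|² |ψ x|² dx` for every single `q`, not just almost every one. Tonelli's theorem
then integrates this identity over `q` with respect to any s-finite measure.
-/

section FiniteDimensional

open SchwartzMap
open scoped ContDiff

variable {E : Type*} [NormedAddCommGroup E] [NormedSpace ℝ E] [FiniteDimensional ℝ E]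
  [MeasurableSpace E] [BorelSpace E]

theorem lintegral_comp_smul (μ : Measure E) [μ.IsAddHaarMeasure] (f : E → ENNReal) {r : ℝ}
    (hr : r ≠ 0) :
    ∫⁻ x, f (r • x) ∂μ = ENNReal.ofReal |(r ^ Module.finrank ℝ E)⁻¹| * ∫⁻ x, f x ∂μ := by
  rw [← smul_eq_mul, ← lintegral_smul_measure, ← Measure.map_addHaar_smul μ hr]
  exact (lintegral_map_equiv f (MeasurableEquiv.smul₀ r hr)).symm

theorem ae_eq_of_integral_schwartzMap_smul_eq {F : Type*} [NormedAddCommGroup F]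
    [NormedSpace ℂ F] [CompleteSpace F] {μ : Measure E} {f g : E → F}
    (hf : LocallyIntegrable f μ) (hg : LocallyIntegrable g μ)
    (h : ∀ φ : 𝓢(E, ℂ), ∫ x, φ x • f x ∂μ = ∫ x, φ x • g x ∂μ) : f =ᵐ[μ] g := by
  refine ae_eq_of_integral_contDiff_smul_eq hf hg fun η η_smooth η_supp ↦ ?_
  have η_supp' : HasCompactSupport (Complex.ofRealCLM ∘ η) := η_supp.comp_left rfl
  have η_smooth' : ContDiff ℝ ∞ (Complex.ofRealCLM ∘ η) := by fun_prop
  simpa using h (η_supp'.toSchwartzMap η_smooth')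

end FiniteDimensional

section Plancherel

open FourierTransform SchwartzMap
open scoped RealInnerProductSpace

variable {V F : Type*} [NormedAddCommGroup V] [InnerProductSpace ℝ V] [FiniteDimensional ℝ V]
  [MeasurableSpace V] [BorelSpace V]

theorem continuous_fourier_of_integrable [NormedAddCommGroup F] [NormedSpace ℂ F]
    {f : V → F} (hf : Integrable f) : Continuous (𝓕 f) :=
  VectorFourier.fourierIntegral_continuous Real.continuous_fourierChar continuous_inner hf

theorem integral_fourier_schwartzMap_smul_eq [NormedAddCommGroup F] [NormedSpace ℂ F]
    [CompleteSpace F] (φ : 𝓢(V, ℂ)) {f : V → F} (hf : Integrable f) :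
    ∫ x, 𝓕 φ x • f x = ∫ x, φ x • 𝓕 f x := by
  simpa using! VectorFourier.integral_fourierIntegral_smul_eq_flip (L := innerₗ V)
    Real.continuous_fourierChar continuous_inner φ.integrable hf

theorem enorm_integral_exp_neg_inner_sub_smul [NormedAddCommGroup F]
    [NormedSpace ℂ F] (f : V → F) (q p : V) :
    ‖∫ x, Complex.exp (-(Complex.I * ⟪p, x - q⟫)) • f x‖ₑ = ‖𝓕 f ((2 * Real.pi)⁻¹ • p)‖ₑ := by
  have phase (x : V) : Complex.exp (-(Complex.I * ⟪p, x - q⟫)) • f x =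
      Complex.exp (⟪p, q⟫ * Complex.I) •
        Complex.exp (↑(-2 * Real.pi * ⟪x, (2 * Real.pi)⁻¹ • p⟫) * Complex.I) • f x := by
    have dilation : -2 * Real.pi * ⟪x, (2 * Real.pi)⁻¹ • p⟫ = -⟪p, x⟫ := by
      rw [real_inner_smul_right, real_inner_comm]
      field_simp
    rw [smul_smul, ← Complex.exp_add, dilation, inner_sub_right]
    congr 2
    push_cast
    ring
  simp_rw [phase]
  rw [integral_smul, enorm_smul, Real.fourier_eq', ← ofReal_norm (Complex.exp _),
    Complex.norm_exp_ofReal_mul_I, ENNReal.ofReal_one, one_mul]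

variable [NormedAddCommGroup F] [InnerProductSpace ℂ F] [CompleteSpace F]

theorem integral_fourier_schwartzMap_smul_Lp_eq (φ : 𝓢(V, ℂ)) (u : Lp (α := V) F 2) :
    ∫ x, 𝓕 φ x • u x = ∫ x, φ x • (𝓕 u : Lp (α := V) F 2) x := by
  simpa using DFunLike.congr_fun (Lp.fourier_toTemperedDistribution_eq u) φ

theorem fourier_ae_eq_fourier_Lp_iff {f : V → F} (hf : Integrable f) (u : Lp (α := V) F 2) :
    𝓕 f =ᵐ[volume] (𝓕 u : Lp (α := V) F 2) ↔ f =ᵐ[volume] u := by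
  have locallyIntegrable_Lp (v : Lp (α := V) F 2) : LocallyIntegrable v :=
    (Lp.memLp v).locallyIntegrable one_le_two
  constructor <;> intro h
  · refine ae_eq_of_integral_schwartzMap_smul_eq hf.locallyIntegrable (locallyIntegrable_Lp u)
      fun φ ↦ ?_
    obtain ⟨χ, rfl⟩ : ∃ χ : 𝓢(V, ℂ), 𝓕 χ = φ := ⟨𝓕⁻ φ, fourier_fourierInv_eq φ⟩
    rw [integral_fourier_schwartzMap_smul_eq χ hf, integral_fourier_schwartzMap_smul_Lp_eq]
    exact integral_congr_ae (h.mono fun ξ hξ ↦ by simp only [hξ])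
  · refine ae_eq_of_integral_schwartzMap_smul_eq
      (continuous_fourier_of_integrable hf).locallyIntegrable (locallyIntegrable_Lp _) fun φ ↦ ?_
    rw [← integral_fourier_schwartzMap_smul_eq φ hf, ← integral_fourier_schwartzMap_smul_Lp_eq]
    exact integral_congr_ae (h.mono fun x hx ↦ by simp only [hx])

theorem eLpNorm_two_fourier_eq {f : V → F} (hf : Integrable f) :
    eLpNorm (𝓕 f) 2 volume = eLpNorm f 2 volume := by
  have eq_of_ae_eq (u : Lp (α := V) F 2) (hu : f =ᵐ[volume] u) :
      eLpNorm (𝓕 f) 2 volume = eLpNorm f 2 volume := by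
    rw [eLpNorm_congr_ae ((fourier_ae_eq_fourier_Lp_iff hf u).2 hu), eLpNorm_congr_ae hu,
      ← Lp.enorm_def, ← Lp.enorm_def, ← ofReal_norm, ← ofReal_norm, Lp.norm_fourier_eq]
  by_cases hf₂ : MemLp f 2
  · exact eq_of_ae_eq hf₂.toLp hf₂.coeFn_toLp.symm
  by_cases hFf₂ : MemLp (𝓕 f) 2
  · refine eq_of_ae_eq (𝓕⁻ hFf₂.toLp) ((fourier_ae_eq_fourier_Lp_iff hf _).1 ?_)
    rw [fourier_fourierInv_eq]
    exact hFf₂.coeFn_toLp.symm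
  · have eLpNorm_eq_top {h : V → F} (hm : AEStronglyMeasurable h) (hh : ¬ MemLp h 2) :
        eLpNorm h 2 volume = ⊤ := by
      by_contra hne
      exact hh ⟨hm, lt_top_iff_ne_top.2 hne⟩
    rw [eLpNorm_eq_top hf.1 hf₂,
      eLpNorm_eq_top (continuous_fourier_of_integrable hf).aestronglyMeasurable hFf₂]

theorem lintegral_enorm_sq_fourier_eq {f : V → F} (hf : Integrable f) :
    ∫⁻ ξ, ‖𝓕 f ξ‖ₑ ^ 2 = ∫⁻ x, ‖f x‖ₑ ^ 2 := by
  have lintegral_eq (h : V → F) : ∫⁻ x, ‖h x‖ₑ ^ 2 = eLpNorm h 2 volume ^ 2 := by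
    simpa using (eLpNorm_nnreal_pow_eq_lintegral (f := h) (μ := volume) two_ne_zero).symm
  rw [lintegral_eq, lintegral_eq, eLpNorm_two_fourier_eq hf]

theorem lintegral_enorm_sq_integral_exp_neg_inner_sub_smul {f : V → F} (hf : Integrable f)
    (q : V) :
    ∫⁻ p, ‖∫ x, Complex.exp (-(Complex.I * ⟪p, x - q⟫)) • f x‖ₑ ^ 2 =
      ENNReal.ofReal ((2 * Real.pi) ^ Module.finrank ℝ V) * ∫⁻ x, ‖f x‖ₑ ^ 2 := by
  simp_rw [enorm_integral_exp_neg_inner_sub_smul]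
  rw [lintegral_comp_smul volume (fun ξ ↦ ‖𝓕 f ξ‖ₑ ^ 2) (by positivity),
    lintegral_enorm_sq_fourier_eq hf, inv_pow, inv_inv, abs_of_pos (by positivity)]

end Plancherel

section PhaseSpace

open scoped ENNReal RealInnerProductSpace ComplexConjugate

variable {V : Type*} [NormedAddCommGroup V] [InnerProductSpace ℝ V] [FiniteDimensional ℝ V]
  [MeasurableSpace V] [BorelSpace V]

/-- The matrix coefficient `⟨U_{q,p} g, ψ⟩` of the Weyl operator
`(U_{q,p} g) x = e^{i⟪p, x - q⟫} g (x - q)`, as a function of the phase-space point `(q, p)`.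
It takes functions rather than `Lp` classes, and equals `0` when the product of `g (· - q)` and `ψ`
is not integrable. -/
def weylCoefficient (g ψ : V → ℂ) (q p : V) : ℂ :=
  ∫ x, Complex.exp (-(Complex.I * ⟪p, x - q⟫)) * conj (g (x - q)) * ψ x

theorem measurable_weylCoefficient {g ψ : V → ℂ} (hg : Measurable g) (hψ : Measurable ψ) :
    Measurable fun z : V × V ↦ weylCoefficient g ψ z.1 z.2 := by
  have integrand : Measurable fun w : (V × V) × V ↦
      Complex.exp (-(Complex.I * ⟪w.1.2, w.2 - w.1.1⟫)) * conj (g (w.2 - w.1.1)) * ψ w.2 := by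
    fun_prop
  exact integrand.stronglyMeasurable.integral_prod_right.measurable

theorem integrable_conj_comp_sub_mul {G 𝕜 : Type*} [AddGroup G] [MeasurableSpace G]
    [MeasurableAdd G] [RCLike 𝕜] {μ : Measure G} [μ.IsAddRightInvariant]
    {r s : ℝ≥0∞} [r.HolderConjugate s] {g ψ : G → 𝕜} (hg : MemLp g r μ) (hψ : MemLp ψ s μ)
    (q : G) : Integrable (fun x ↦ conj (g (x - q)) * ψ x) μ :=
  (hg.comp_measurePreserving (measurePreserving_sub_right μ q)).star.integrable_mul hψ

theorem lintegral_enorm_sq_weylCoefficient {g ψ : V → ℂ} {q : V}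
    (hgψ : Integrable fun x ↦ conj (g (x - q)) * ψ x) :
    ∫⁻ p, ‖weylCoefficient g ψ q p‖ₑ ^ 2 =
      ENNReal.ofReal ((2 * Real.pi) ^ Module.finrank ℝ V) *
        ∫⁻ x, ‖g (x - q)‖ₑ ^ 2 * ‖ψ x‖ₑ ^ 2 := by
  simpa [weylCoefficient, mul_assoc, mul_pow] using
    lintegral_enorm_sq_integral_exp_neg_inner_sub_smul hgψ q

theorem position_marginal_of_phase_space_observable_general {r s : ℝ≥0∞} [r.HolderConjugate s]
    (g : Lp ℂ r (volume : Measure V)) (ψ : Lp ℂ s (volume : Measure V))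
    (μ : Measure V) [SFinite μ] :
    ∫⁻ z, ‖weylCoefficient g ψ z.1 z.2‖ₑ ^ 2 ∂μ.prod volume =
      ENNReal.ofReal ((2 * Real.pi) ^ Module.finrank ℝ V) *
        ∫⁻ x, (∫⁻ y, ‖g (x - y)‖ₑ ^ 2 ∂μ) * ‖ψ x‖ₑ ^ 2 := by
  have hg : Measurable g := (Lp.stronglyMeasurable g).measurable
  have hψ : Measurable ψ := (Lp.stronglyMeasurable ψ).measurable
  have density : Measurable fun w : V × V ↦ ‖g (w.2 - w.1)‖ₑ ^ 2 * ‖ψ w.2‖ₑ ^ 2 := by fun_prop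
  have p_integral (q : V) := lintegral_enorm_sq_weylCoefficient
    (integrable_conj_comp_sub_mul (Lp.memLp g) (Lp.memLp ψ) q)
  rw [lintegral_prod _ ((measurable_weylCoefficient hg hψ).enorm.pow_const 2).aemeasurable]
  simp_rw [p_integral]
  rw [lintegral_const_mul _ density.lintegral_prod_right',
    lintegral_lintegral_swap density.aemeasurable]
  simp_rw [fun x ↦ lintegral_mul_const (μ := μ) (‖ψ x‖ₑ ^ 2)
    (show Measurable fun y ↦ ‖g (x - y)‖ₑ ^ 2 by fun_prop)]

end PhaseSpace

/-- For `g, ψ ∈ L²(ℝ)` and a Borel set `Δ ⊆ ℝ`,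
`(1/2π) ∫_{Δ×ℝ} |⟨U_{q,p} g, ψ⟩|² d(q,p) = ∫ (1_Δ ∗ |g|²)(x) |ψ(x)|² dx`:
the position marginal of the phase-space observable generated by `g` is the smearing of
the position observable by the convolution kernel `1_Δ ∗ |g|²`. -/
theorem position_marginal_of_phase_space_observable
    (g ψ : Lp ℂ 2 (volume : Measure ℝ)) (Δ : Set ℝ) (hΔ : MeasurableSet Δ) :
    ∫⁻ z in Δ ×ˢ (Set.univ : Set ℝ), ENNReal.ofReal
        (‖∫ x : ℝ, Complex.exp (-(Complex.I * (z.2 : ℂ) * ((x : ℂ) - (z.1 : ℂ)))) *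
            (starRingEnd ℂ) (g (x - z.1)) * ψ x‖ ^ 2) =
      ENNReal.ofReal (2 * Real.pi) *
        ∫⁻ x : ℝ, (∫⁻ y in Δ, ENNReal.ofReal (‖g (x - y)‖ ^ 2)) *
          ENNReal.ofReal (‖ψ x‖ ^ 2) := by
  rw [Measure.volume_eq_prod, ← Measure.prod_restrict, Measure.restrict_univ]
  simpa [weylCoefficient, ENNReal.ofReal_pow, mul_assoc, mul_comm, mul_left_comm] using
    position_marginal_of_phase_space_observable_general g ψ (volume.restrict Δ)
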